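/- arXiv:0706.3627 — 3 statements merged into one kernel-verified Lean document; each statement's English description precedes it below -/
import Mathlib

section
/- Let h > 0 and c ∈ ℂ, and define e_c^{(1,h)}(x) := h^c·Γ(1+c−x/h)/Γ(1−x/h), where Γ is the complex Gamma function and h^c := exp(c·ln h). Then for every x ∈ ℂ such that neither 1 − x/h nor 1 + c − x/h is a nonpositive integer, one has ((x−h)/h)·(e_c^{(1,h)}(x) − e_c^{(1,h)}(x−h)) = c·e_c^{(1,h)}(x), i.e. δ_{1,h}(e_c^{(1,h)})(x) = c·e_c^{(1,h)}(x). -/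
open Complex Filter

noncomputable section

/-- The character `e_c^{(1,h)}(x) = h^c·Γ(1+c-x/h)/Γ(1-x/h)`, with `h^c := exp(c·ln h)`. -/
def egam (h : ℝ) (c : ℂ) (x : ℂ) : ℂ :=
  Complex.exp (c * Real.log h) * Complex.Gamma (1 + c - x / (h : ℂ)) /
    Complex.Gamma (1 - x / (h : ℂ))

/-- The character equation for `q = 1`, `h > 0`:
`δ_{1,h}(e_c^{(1,h)})(x) = ((x-h)/h)·(e_c^{(1,h)}(x) - e_c^{(1,h)}(x-h)) = c·e_c^{(1,h)}(x)`. -/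
theorem egam_character_equation (h : ℝ) (hh : 0 < h) (c : ℂ) (x : ℂ)
    (hx1 : ∀ n : ℕ, 1 - x / (h : ℂ) ≠ -(n : ℂ))
    (hx2 : ∀ n : ℕ, 1 + c - x / (h : ℂ) ≠ -(n : ℂ)) :
    ((x - (h : ℂ)) / (h : ℂ)) * (egam h c x - egam h c (x - (h : ℂ))) = c * egam h c x := by
  have hh0 : (h : ℂ) ≠ 0 := by exact_mod_cast hh.ne'
  have hs : 1 - x / (h : ℂ) ≠ 0 := by simpa using hx1 0
  have ht : 1 + c - x / (h : ℂ) ≠ 0 := by simpa using hx2 0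
  have hG : Gamma (1 - x / (h : ℂ)) ≠ 0 := Gamma_ne_zero hx1
  -- With `s = 1 - x/h`, the shift `x ↦ x - h` is `s ↦ s + 1`, so `Γ(z + 1) = z Γ(z)` gives
  -- `e(x - h) = ((s + c) / s) e(x)`, while the prefactor `(x - h)/h` is `-s`.
  have e1 : 1 + c - (x - (h : ℂ)) / (h : ℂ) = (1 + c - x / (h : ℂ)) + 1 := by
    field_simp
    ring
  have e2 : 1 - (x - (h : ℂ)) / (h : ℂ) = (1 - x / (h : ℂ)) + 1 := by
    field_simp
    ring
  have e3 : (x - (h : ℂ)) / (h : ℂ) = -(1 - x / (h : ℂ)) := by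
    field_simp
    ring
  have e4 : 1 + c - x / (h : ℂ) = (1 - x / (h : ℂ)) + c := by ring
  unfold egam
  rw [e1, e2, e3, Gamma_add_one _ hs, Gamma_add_one _ ht, e4]
  generalize 1 - x / (h : ℂ) = s at *
  field_simp
  ring
end
end

section
/- Let q₀ > 1, p₀ := 1/q₀, c ∈ ℂ, q₀^c := exp(c·ln q₀), ξ ∈ [0,1), and set h_n := (1−p₀)·p₀^{ξ+n} for n ∈ ℕ. Then, as n → ∞, the functions e_c^{(q₀,h_n)} converge, uniformly on every compact subset of ℂ ∖ {q₀^c·t : t ∈ [0,∞)}, to the function x ↦ p₀^{ξc}·Θ_{q₀}(p₀^{−ξ}·x)/Θ_{q₀}(p₀^{c−ξ}·x), where p₀^{ξc} := exp(ξ·c·ln p₀) and p₀^{c−ξ} := exp((c−ξ)·ln p₀). -/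
/-!
Write `p = 1/q₀`, `a = p^c`, `y = p^{-ξ} x`. Then `z(x) = p^{-n}(y + p^{n+1})`, and in the product
`∏_j (1 - a p^j z)` the factors with `j ≥ n` form `∏_i (1 - a p^i (y + p^{n+1}))`, while the
factors with `j < n` are `-(a y)/p^k` times `1 - (p^k/a - p^{n+1})/y`, `1 ≤ k ≤ n`
(`tprod_eq_shProd`). In the quotient of the products for `a = 1` and `a = p^c`, the parts
`-(a y)/p^k` leave `a^{-n}`, which cancels against the prefactor `(p^{ξ+n})^c = p^{ξc} a^n`
(`echar_eq`). What remains converges, by dominated convergence for infinite products, to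
`∏_{i≥0} (1 - a p^i y) ∏_{k≥1} (1 - p^k/(a y))` (`tendsto_shProd`). By the Jacobi triple product
(`triple_product`), this is `Θ(a y)` divided by a nonzero constant independent of `a` and `y`, so
the quotient tends to `p^{ξc} Θ(y)/Θ(a y)`.

The triple product is obtained from the `q`-binomial theorem (`gaussBin_sum`, `finite_triple`) by
letting the upper index tend to infinity under dominated convergence.

Uniformity comes from proving all limits jointly in `(n, x)` along `atTop ×ˢ 𝓝[K] x`
(`tendstoLocallyUniformlyOn_of_joint`); the denominator has no zero on `K` because the zeros of
`Θ` lie in `p^ℤ`, which puts `x` on the excluded ray `q₀^c [0, ∞)`.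
-/

open Complex Filter

noncomputable section

/-- `z(x) = (1-p)x/h + p` with `p = 1/q`. -/
def zc (q h : ℝ) (x : ℂ) : ℂ := (1 - (q : ℂ)⁻¹) * x / (h : ℂ) + (q : ℂ)⁻¹

/-- The `j`-th factor of the infinite product defining `e_c^{(q,h)}`. -/
def charTerm (q h : ℝ) (c : ℂ) (x : ℂ) (j : ℕ) : ℂ :=
  (1 - (q : ℂ)⁻¹ ^ j * zc q h x) / (1 - Complex.exp (((j : ℂ) + c) * Real.log q⁻¹) * zc q h x)

/-- The character `e_c^{(q,h)}` for `q > 1`, `h > 0`. -/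
def echar (q h : ℝ) (c : ℂ) (x : ℂ) : ℂ :=
  ((h / (1 - q⁻¹) : ℝ) : ℂ) ^ c * ∏' j : ℕ, charTerm q h c x j

/-- Jacobi theta function `Θ_q(x) = Σ_{n∈ℤ} (-1)^n q^{-n(n-1)/2} x^n`. -/
def theta (q : ℝ) (x : ℂ) : ℂ :=
  ∑' n : ℤ, (-1 : ℂ) ^ n * ((q : ℂ) ^ (-(n * (n - 1) / 2)) : ℂ) * x ^ n

/-! ### Gaussian binomial coefficients -/

/-- The finite `q`-factorial product `(p;p)_n = ∏_{i=1}^{n} (1 - p^i)`. -/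
def qPoch (p : ℝ) (n : ℕ) : ℝ := ∏ i ∈ Finset.range n, (1 - p ^ (i + 1))

/-- The Gaussian binomial coefficient in base `p`, defined through its Pascal rule; it vanishes
for `k > N`, so the truncated exponent `N - k` is harmless. -/
def gaussBin (p : ℝ) : ℕ → ℕ → ℝ
  | _, 0 => 1
  | 0, _ + 1 => 0
  | N + 1, k + 1 => gaussBin p N (k + 1) + p ^ (N - k) * gaussBin p N k

lemma gaussBin_zero_right (p : ℝ) (N : ℕ) : gaussBin p N 0 = 1 := by
  cases N <;> simp [gaussBin]

lemma gaussBin_eq_zero (p : ℝ) (N : ℕ) : ∀ k, N < k → gaussBin p N k = 0 := by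
  induction N with
  | zero =>
    intro k hk
    obtain ⟨k, rfl⟩ := Nat.exists_eq_succ_of_ne_zero (by omega : k ≠ 0)
    simp [gaussBin]
  | succ N ih =>
    intro k hk
    obtain ⟨k, rfl⟩ := Nat.exists_eq_succ_of_ne_zero (by omega : k ≠ 0)
    simp [gaussBin, ih (k + 1) (by omega), ih k (by omega)]

lemma gaussBin_self (p : ℝ) (N : ℕ) : gaussBin p N N = 1 := by
  induction N with
  | zero => simp [gaussBin]
  | succ N ih => simp [gaussBin, ih, gaussBin_eq_zero p N (N + 1) (by omega)]

/-- The closed formula `[N, a] = (p;p)_N / ((p;p)_a (p;p)_b)` for `a + b = N`, cleared of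
denominators. -/
lemma gaussBin_mul (p : ℝ) (N : ℕ) : ∀ a b, a + b = N →
    gaussBin p N a * qPoch p a * qPoch p b = qPoch p N := by
  induction N with
  | zero =>
    intro a b h
    obtain ⟨rfl, rfl⟩ : a = 0 ∧ b = 0 := by omega
    simp [gaussBin, qPoch]
  | succ N ih =>
    intro a b h
    rcases a with _ | a
    · obtain rfl : b = N + 1 := by omega
      simp [gaussBin_zero_right, qPoch]
    rcases b with _ | b
    · obtain rfl : a = N := by omega
      rw [gaussBin_self]; simp [qPoch]
    have h1 := ih (a + 1) b (by omega)
    have h2 := ih a (b + 1) (by omega)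
    have hN : N - a = b + 1 := by omega
    have hs : ∀ n, qPoch p (n + 1) = qPoch p n * (1 - p ^ (n + 1)) := fun n => by
      simp [qPoch, Finset.prod_range_succ]
    rw [hs N, gaussBin, hN]
    have e1 : p ^ (N + 1) = p ^ (b + 1) * p ^ (a + 1) := by rw [← pow_add]; congr 1; omega
    rw [e1]
    rw [hs b] at *
    rw [hs a] at *
    linear_combination (1 - p ^ (b + 1)) * h1 + p ^ (b + 1) * (1 - p ^ (a + 1)) * h2

/-- The `q`-binomial theorem, phrased for an arbitrary sequence satisfying the recursion
`s (k+1) = -p^k w s k` of the terms `(-1)^k p^{k(k-1)/2} w^k`. -/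
lemma gaussBin_sum (p : ℝ) (w : ℂ) (s : ℕ → ℂ) (hs : ∀ k, s (k + 1) = -((p : ℂ) ^ k * w * s k))
    (N : ℕ) : ∑ k ∈ Finset.range (N + 1), (gaussBin p N k : ℂ) * s k
      = s 0 * ∏ i ∈ Finset.range N, (1 - (p : ℂ) ^ i * w) := by
  induction N with
  | zero => simp [gaussBin]
  | succ N ih =>
    rw [Finset.prod_range_succ, ← mul_assoc, ← ih, Finset.sum_range_succ']
    have h1 : ∀ k ∈ Finset.range (N + 1), (gaussBin p (N + 1) (k + 1) : ℂ) * s (k + 1)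
        = (gaussBin p N (k + 1) : ℂ) * s (k + 1)
          - (p : ℂ) ^ N * w * ((gaussBin p N k : ℂ) * s k) := by
      intro k hk
      have hk' : k ≤ N := by simpa [Nat.lt_succ_iff] using hk
      have : (p : ℂ) ^ N = (p : ℂ) ^ (N - k) * (p : ℂ) ^ k := by
        rw [← pow_add]; congr 1; omega
      rw [gaussBin, this]
      push_cast
      rw [add_mul]
      nth_rw 2 [hs k]
      ring
    rw [Finset.sum_congr rfl h1, Finset.sum_sub_distrib, ← Finset.mul_sum]
    have h2 := Finset.sum_range_succ' (fun k => (gaussBin p N k : ℂ) * s k) (N + 1)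
    rw [Finset.sum_range_succ, gaussBin_eq_zero p N (N + 1) (by omega)] at h2
    simp only [gaussBin_zero_right] at h2 ⊢
    simp only [Complex.ofReal_zero, zero_mul, add_zero] at h2
    linear_combination -h2

/-! ### The Jacobi triple product -/

/-- The general term of the theta series in base `p = 1/q`. -/
def thTerm (p : ℝ) (y : ℂ) (m : ℤ) : ℂ :=
  (-1 : ℂ) ^ m * (p : ℂ) ^ (m * (m - 1) / 2) * y ^ m

lemma thTerm_succ {p : ℝ} (hp : 0 < p) {y : ℂ} (hy : y ≠ 0) (m : ℤ) :
    thTerm p y (m + 1) = -((p : ℂ) ^ m * y * thTerm p y m) := by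
  have hp' : (p : ℂ) ≠ 0 := by exact_mod_cast hp.ne'
  have h : (m + 1) * (m + 1 - 1) / 2 = m * (m - 1) / 2 + m := by
    have : (m + 1) * (m + 1 - 1) = m * (m - 1) + m * 2 := by ring
    rw [this, Int.add_mul_ediv_right _ _ (by norm_num)]
  rw [thTerm, h, zpow_add₀ hp', zpow_add_one₀ hy, zpow_add_one₀ (by norm_num), thTerm]
  ring

/-- A finite form of the Jacobi triple product: the `q`-binomial theorem with `N = 2n` and
`w = p^{-n} y`. -/
lemma finite_triple {p : ℝ} (hp : 0 < p) {y : ℂ} (hy : y ≠ 0) (n : ℕ) :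
    ∑ k ∈ Finset.range (2 * n + 1), (gaussBin p (2 * n) k : ℂ) * thTerm p y ((k : ℤ) - n)
      = (∏ i ∈ Finset.range n, (1 - (p : ℂ) ^ i * y)) *
        ∏ k ∈ Finset.range n, (1 - (p : ℂ) ^ (k + 1) / y) := by
  have hp' : (p : ℂ) ≠ 0 := by exact_mod_cast hp.ne'
  rw [gaussBin_sum p ((p : ℂ) ^ (-(n : ℤ)) * y) (fun k : ℕ => thTerm p y ((k : ℤ) - n))]
  · rw [two_mul, Finset.prod_range_add, ← mul_assoc, mul_comm]
    congr 1
    · refine Finset.prod_congr rfl fun i _ => ?_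
      rw [← mul_assoc, ← zpow_natCast, ← zpow_add₀ hp', ← zpow_natCast]
      congr 3; push_cast; ring
    · induction n with
      | zero => simp [thTerm]
      | succ n ih =>
        rw [Finset.prod_range_succ', Finset.prod_range_succ, ← ih]
        have h1 := thTerm_succ hp hy (-(n : ℤ) - 1)
        have h2 : ∀ i : ℕ, (p : ℂ) ^ (i + 1) * ((p : ℂ) ^ (-((n + 1 : ℕ) : ℤ)) * y)
            = (p : ℂ) ^ i * ((p : ℂ) ^ (-(n : ℤ)) * y) := by
          intro i
          have : (p : ℂ) ^ (-(n : ℤ)) = p * (p : ℂ) ^ (-((n + 1 : ℕ) : ℤ)) := by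
            rw [← zpow_one_add₀ hp']; congr 1; push_cast; ring
          rw [this]; ring
        simp only [h2]
        have e1 : ((0 : ℕ) : ℤ) - ((n + 1 : ℕ) : ℤ) = -(n : ℤ) - 1 := by push_cast; ring
        have e2 : ((0 : ℕ) : ℤ) - (n : ℤ) = -(n : ℤ) - 1 + 1 := by push_cast; ring
        have e3 : -((n + 1 : ℕ) : ℤ) = -(n : ℤ) - 1 := by push_cast; ring
        have e4 : (p : ℂ) ^ (n + 1) * (p : ℂ) ^ (-(n : ℤ) - 1) = 1 := by
          rw [← zpow_natCast, ← zpow_add₀ hp']; simp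
        rw [e1, e2, e3, h1]
        have e5 : (p : ℂ) ^ (-(n : ℤ) - 1) * y * ((p : ℂ) ^ (n + 1) / y) = 1 := by
          rw [← e4]; field_simp
        simp only [pow_zero, one_mul]
        linear_combination (-thTerm p y (-(n : ℤ) - 1) *
          ∏ i ∈ Finset.range n, (1 - (p : ℂ) ^ i * ((p : ℂ) ^ (-(n : ℤ)) * y))) * e5
  · intro k
    have := thTerm_succ hp hy ((k : ℤ) - n)
    rw [show ((k + 1 : ℕ) : ℤ) - (n : ℤ) = (k : ℤ) - n + 1 by push_cast; ring, this,
      sub_eq_add_neg, zpow_add₀ hp', zpow_natCast]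
    ring

lemma thTerm_ne_zero {p : ℝ} (hp : 0 < p) {y : ℂ} (hy : y ≠ 0) (m : ℤ) : thTerm p y m ≠ 0 := by
  have hp' : (p : ℂ) ≠ 0 := by exact_mod_cast hp.ne'
  unfold thTerm
  have : (-1 : ℂ) ≠ 0 := by norm_num
  positivity

lemma summable_thTerm {p : ℝ} (hp : 0 < p) (hp1 : p < 1) {y : ℂ} (hy : y ≠ 0) :
    Summable fun m => ‖thTerm p y m‖ := by
  have hp' : (p : ℂ) ≠ 0 := by exact_mod_cast hp.ne'
  have hpow : Tendsto (fun n : ℕ => p ^ n) atTop (nhds 0) :=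
    tendsto_pow_atTop_nhds_zero_of_lt_one hp.le hp1
  apply Summable.of_nat_of_neg_add_one
  · refine summable_of_ratio_test_tendsto_lt_one (l := 0) one_pos
      (Eventually.of_forall fun n => norm_ne_zero_iff.2 (thTerm_ne_zero hp hy _)) ?_
    have : Tendsto (fun n : ℕ => p ^ n * ‖y‖) atTop (nhds 0) := by simpa using hpow.mul_const ‖y‖
    refine this.congr fun n => ?_
    have h0 := norm_ne_zero_iff.2 (thTerm_ne_zero hp hy (n : ℤ))
    rw [norm_norm, norm_norm, Nat.cast_succ, thTerm_succ hp hy, norm_neg, norm_mul, norm_mul,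
      mul_div_assoc, div_self h0, zpow_natCast, norm_pow, Complex.norm_real, Real.norm_eq_abs,
      abs_of_pos hp, mul_one]
  · refine summable_of_ratio_test_tendsto_lt_one (l := 0) one_pos
      (Eventually.of_forall fun n => norm_ne_zero_iff.2 (thTerm_ne_zero hp hy _)) ?_
    have : Tendsto (fun n : ℕ => p ^ n * (p ^ 2 / ‖y‖)) atTop (nhds 0) := by
      simpa using hpow.mul_const (p ^ 2 / ‖y‖)
    refine this.congr fun n => ?_
    have h1 := thTerm_succ hp hy (-((n : ℤ) + 2))
    have h0 := norm_ne_zero_iff.2 (thTerm_ne_zero hp hy (-((n : ℤ) + 2)))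
    have hy0 := norm_ne_zero_iff.2 hy
    rw [norm_norm, norm_norm, Nat.cast_succ,
      show -((n : ℤ) + 1 + 1) = -((n : ℤ) + 2) by ring,
      show -((n : ℤ) + 1) = -((n : ℤ) + 2) + 1 by ring, h1, norm_neg, norm_mul, norm_mul,
      norm_zpow, Complex.norm_real, Real.norm_eq_abs, abs_of_pos hp, zpow_neg]
    have : p ^ ((n : ℤ) + 2) = p ^ (n + 2) := by exact_mod_cast zpow_natCast p (n + 2)
    rw [this, pow_add]
    field_simp

lemma summable_pow_mul {p : ℝ} (hp : 0 < p) (hp1 : p < 1) (C : ℝ) :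
    Summable fun i : ℕ => p ^ i * C :=
  (summable_geometric_of_lt_one hp.le hp1).mul_right C

/-- `(p;p)_n` decreases to a positive limit. -/
lemma qPoch_limit {p : ℝ} (hp : 0 < p) (hp1 : p < 1) :
    ∃ L : ℝ, 0 < L ∧ Tendsto (qPoch p) atTop (nhds L) ∧ ∀ n, L ≤ qPoch p n ∧ qPoch p n ≤ 1 := by
  have hs : Summable fun i : ℕ => ‖-p ^ (i + 1)‖ := by
    refine (summable_pow_mul hp hp1 p).congr fun i => ?_
    rw [norm_neg, Real.norm_eq_abs, abs_of_pos (by positivity), pow_succ]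
  have hlt : ∀ i : ℕ, p ^ (i + 1) < 1 := fun i => pow_lt_one₀ hp.le hp1 (by omega)
  have hne : ∏' i : ℕ, (1 + -p ^ (i + 1)) ≠ 0 :=
    tprod_one_add_ne_zero_of_summable (fun i => ne_of_gt (by linarith [hlt i])) hs
  have ht := (multipliable_one_add_of_summable hs).hasProd.tendsto_prod_nat
  have hq : (fun n => ∏ i ∈ Finset.range n, (1 + -p ^ (i + 1))) = qPoch p := by
    funext n; simp [qPoch, sub_eq_add_neg]
  rw [hq] at ht
  have hpos : ∀ n, 0 < qPoch p n := fun n =>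
    Finset.prod_pos fun i _ => by linarith [hlt i]
  have hanti : Antitone (qPoch p) := antitone_nat_of_succ_le fun n => by
    have h1 : qPoch p (n + 1) = qPoch p n * (1 - p ^ (n + 1)) := Finset.prod_range_succ _ _
    have h2 := hpos n
    have h3 : 0 < p ^ (n + 1) := by positivity
    nlinarith
  refine ⟨_, lt_of_le_of_ne (ge_of_tendsto' ht fun n => (hpos n).le) hne.symm, ht, fun n =>
    ⟨hanti.le_of_tendsto ht n, ?_⟩⟩
  simpa [qPoch] using hanti (Nat.zero_le n)

/-- The product side of the Jacobi triple product, without the constant factor `(p;p)_∞`. -/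
def thProd (p : ℝ) (y : ℂ) : ℂ :=
  (∏' i : ℕ, (1 + -((p : ℂ) ^ i * y))) * ∏' k : ℕ, (1 + -((p : ℂ) ^ (k + 1) / y))

lemma summable_norm_pow_mul {p : ℝ} (hp : 0 < p) (hp1 : p < 1) (y : ℂ) :
    Summable fun i : ℕ => ‖-((p : ℂ) ^ i * y)‖ := by
  refine (summable_pow_mul hp hp1 ‖y‖).congr fun i => ?_
  rw [norm_neg, norm_mul, norm_pow, Complex.norm_real, Real.norm_eq_abs, abs_of_pos hp]

lemma summable_norm_pow_div {p : ℝ} (hp : 0 < p) (hp1 : p < 1) (y : ℂ) :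
    Summable fun i : ℕ => ‖-((p : ℂ) ^ (i + 1) / y)‖ := by
  refine (summable_norm_pow_mul hp hp1 (p / y)).congr fun i => ?_
  rw [pow_succ, mul_div_assoc]

/-- The Jacobi triple product: the theta series is `(p;p)_∞` times the product. Only the
independence of the (nonzero) constant from `y` matters here. -/
lemma triple_product {p : ℝ} (hp : 0 < p) (hp1 : p < 1) :
    ∃ L : ℂ, L ≠ 0 ∧ ∀ y : ℂ, y ≠ 0 → ∑' m, thTerm p y m = L * thProd p y := by
  obtain ⟨L, hL, hlim, hbd⟩ := qPoch_limit hp hp1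
  refine ⟨L, by exact_mod_cast hL.ne', fun y hy => ?_⟩
  -- the Gaussian coefficient `[2n, n+m]`, extended by zero to all `m : ℤ`
  set g : ℕ → ℤ → ℝ := fun n m => if -(n : ℤ) ≤ m then gaussBin p (2 * n) (m + n).toNat else 0
  have hg : ∀ (n : ℕ) (m : ℤ), (a b : ℕ) → (a : ℤ) = n + m → (b : ℤ) = n - m →
      g n m = qPoch p (2 * n) / (qPoch p a * qPoch p b) := by
    intro n m a b ha hb
    have h1 := gaussBin_mul p (2 * n) a b (by omega)
    have : (m + n).toNat = a := by omega
    have h2 : 0 < qPoch p a := hL.trans_le (hbd a).1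
    have h3 : 0 < qPoch p b := hL.trans_le (hbd b).1
    simp only [g]
    rw [if_pos (by omega), this, eq_div_iff (by positivity), ← h1]; ring
  have hg0 : ∀ (n : ℕ) (m : ℤ), (n : ℤ) < |m| → g n m = 0 := by
    intro n m h
    simp only [g]
    split_ifs with h'
    · apply gaussBin_eq_zero
      rcases abs_cases m with h2 | h2 <;> omega
    · rfl
  have hsum : ∀ n, ∑' m : ℤ, (g n m : ℂ) * thTerm p y m
      = (∏ i ∈ Finset.range n, (1 - (p : ℂ) ^ i * y)) *
        ∏ k ∈ Finset.range n, (1 - (p : ℂ) ^ (k + 1) / y) := by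
    intro n
    rw [← finite_triple hp hy]
    obtain ⟨e, he⟩ : ∃ e : ℕ ↪ ℤ, ∀ k, e k = (k : ℤ) - n :=
      ⟨⟨fun k => (k : ℤ) - n, fun a b h => by simpa using h⟩, fun _ => rfl⟩
    rw [tsum_eq_sum (s := (Finset.range (2 * n + 1)).map e), Finset.sum_map]
    · refine Finset.sum_congr rfl fun k _ => ?_
      simp only [he, g]
      rw [if_pos (by omega), sub_add_cancel, Int.toNat_natCast]
    · intro m hm
      rw [hg0 n m, Complex.ofReal_zero, zero_mul]
      by_contra h
      rw [not_lt, abs_le] at h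
      apply hm
      rw [Finset.mem_map]
      exact ⟨(m + n).toNat, by simp; omega, by rw [he]; omega⟩
  have hT1 : Tendsto (fun n : ℕ => ∑' m : ℤ, (g n m : ℂ) * thTerm p y m) atTop
      (nhds (∑' m : ℤ, (L : ℂ)⁻¹ * thTerm p y m)) := by
    refine tendsto_tsum_of_dominated_convergence
      (bound := fun m => 1 / (L * L) * ‖thTerm p y m‖)
      ((summable_thTerm hp hp1 hy).mul_left _) (fun m => ?_) (Eventually.of_forall fun n m => ?_)
    · refine Tendsto.mul_const _ ?_
      rw [← Complex.ofReal_inv]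
      refine (Complex.continuous_ofReal.tendsto _).comp ?_
      have ta : Tendsto (fun n : ℕ => ((n : ℤ) + m).toNat) atTop atTop :=
        tendsto_atTop.2 fun b => (eventually_ge_atTop (b + m.natAbs)).mono fun n hn => by omega
      have tb : Tendsto (fun n : ℕ => ((n : ℤ) - m).toNat) atTop atTop :=
        tendsto_atTop.2 fun b => (eventually_ge_atTop (b + m.natAbs)).mono fun n hn => by omega
      have tc : Tendsto (fun n : ℕ => 2 * n) atTop atTop :=
        tendsto_atTop.2 fun b => (eventually_ge_atTop b).mono fun n hn => by omega
      have := (hlim.comp tc).div ((hlim.comp ta).mul (hlim.comp tb)) (by positivity)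
      rw [show L / (L * L) = L⁻¹ by field_simp] at this
      refine this.congr' ((eventually_ge_atTop m.natAbs).mono fun n hn => ?_)
      exact (hg n m (n + m).toNat (n - m).toNat (by omega) (by omega)).symm
    · rw [norm_mul]
      refine mul_le_mul_of_nonneg_right ?_ (norm_nonneg _)
      rw [Complex.norm_real, Real.norm_eq_abs]
      rcases lt_or_ge (n : ℤ) |m| with h | h
      · rw [hg0 n m h]; simp; positivity
      · rw [abs_le] at h
        rw [hg n m (n + m).toNat (n - m).toNat (by omega) (by omega)]
        have h1 := hbd (n + m).toNat
        have h2 := hbd (n - m).toNat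
        have h3 := hbd (2 * n)
        have h4 : 0 < qPoch p (2 * n) := hL.trans_le h3.1
        have h5 := hL.trans_le h1.1
        have h6 := hL.trans_le h2.1
        rw [abs_of_pos (by positivity)]
        exact div_le_div₀ zero_le_one h3.2 (by positivity) (mul_le_mul h1.1 h2.1 hL.le h5.le)
  have hT2 : Tendsto (fun n : ℕ => ∑' m : ℤ, (g n m : ℂ) * thTerm p y m) atTop
      (nhds (thProd p y)) := by
    simp only [hsum, sub_eq_add_neg]
    exact (multipliable_one_add_of_summable
        (summable_norm_pow_mul hp hp1 y)).hasProd.tendsto_prod_nat.mul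
      (multipliable_one_add_of_summable (summable_norm_pow_div hp hp1 y)).hasProd.tendsto_prod_nat
  have := tendsto_nhds_unique hT1 hT2
  rw [tsum_mul_left] at this
  have hL' : (L : ℂ) ≠ 0 := by exact_mod_cast hL.ne'
  rw [← this, mul_inv_cancel_left₀ hL']

/-! ### The normalised products and their limit -/

/-- The product `∏ (1 - a p^j z)` with `z = p^{-n}(y + p^{n+1})`, after its first `n` factors have
been divided by their dominant parts `-a y / p^{k+1}`. -/
def shProd (p : ℝ) (a : ℂ) (n : ℕ) (y : ℂ) : ℂ :=
  (∏' i : ℕ, (1 + -((p : ℂ) ^ i * (a * (y + (p : ℂ) ^ (n + 1)))))) *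
    ∏ k ∈ Finset.range n, (1 + -(((p : ℂ) ^ (k + 1) / a - (p : ℂ) ^ (n + 1)) / y))

/-- Pulling the dominant parts out of the first `n` factors; the factor with index `j` corresponds
to `k = n - 1 - j`. -/
lemma tprod_eq_shProd {p : ℝ} (hp : 0 < p) (hp1 : p < 1) {a y z : ℂ} (ha : a ≠ 0) (hy : y ≠ 0)
    (n : ℕ) (hz : (p : ℂ) ^ n * z = y + (p : ℂ) ^ (n + 1)) :
    ∏' j : ℕ, (1 + -((p : ℂ) ^ j * (a * z)))
      = (∏ k ∈ Finset.range n, (-(a * y) / (p : ℂ) ^ (k + 1))) * shProd p a n y := by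
  have hp' : (p : ℂ) ≠ 0 := by exact_mod_cast hp.ne'
  have hsh : ∀ i : ℕ, (p : ℂ) ^ (i + n) * (a * z)
      = (p : ℂ) ^ i * (a * (y + (p : ℂ) ^ (n + 1))) := fun i => by
    rw [← hz]; ring
  rw [← Multipliable.prod_mul_tprod_nat_mul' (k := n)]
  · simp only [hsh]
    rw [shProd, mul_left_comm, mul_comm, ← Finset.prod_mul_distrib]
    congr 1
    rw [← Finset.prod_range_reflect]
    refine Finset.prod_congr rfl fun k hk => ?_
    have hk' : k < n := Finset.mem_range.1 hk
    have h1 : (p : ℂ) ^ (n - 1 - k) * z = (y + (p : ℂ) ^ (n + 1)) / (p : ℂ) ^ (k + 1) := by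
      rw [eq_div_iff (by positivity), ← hz]
      have : (p : ℂ) ^ n = (p : ℂ) ^ (n - 1 - k) * (p : ℂ) ^ (k + 1) := by
        rw [← pow_add]; congr 1; omega
      rw [this]; ring
    rw [mul_left_comm, h1]
    field_simp
    ring
  · simp only [hsh]
    exact multipliable_one_add_of_summable (summable_norm_pow_mul hp hp1 _)

/-- As `n → ∞` both halves of `shProd` converge, by dominated convergence for infinite products.
Joint convergence in `(n, y)` is what yields locally uniform convergence. -/
lemma tendsto_shProd {p : ℝ} (hp : 0 < p) (hp1 : p < 1) {a y : ℂ} (ha : a ≠ 0) (hy : y ≠ 0) :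
    Tendsto (fun v : ℕ × ℂ => shProd p a v.1 v.2) (atTop ×ˢ nhds y)
      (nhds (thProd p (a * y))) := by
  have hnp : ∀ k : ℕ, ‖(p : ℂ) ^ k‖ = p ^ k := fun k => by
    rw [norm_pow, Complex.norm_real, Real.norm_eq_abs, abs_of_pos hp]
  have hy0 : 0 < ‖y‖ := norm_pos_iff.2 hy
  have ha0 : 0 < ‖a‖ := norm_pos_iff.2 ha
  have t1 : Tendsto (fun v : ℕ × ℂ => v.1) (atTop ×ˢ nhds y) atTop := tendsto_fst
  have t2 : Tendsto (fun v : ℕ × ℂ => v.2) (atTop ×ˢ nhds y) (nhds y) := tendsto_snd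
  have tp : Tendsto (fun v : ℕ × ℂ => (p : ℂ) ^ (v.1 + 1)) (atTop ×ˢ nhds y) (nhds 0) := by
    have h := tendsto_pow_atTop_nhds_zero_of_norm_lt_one (x := (p : ℂ))
      (by rw [Complex.norm_real, Real.norm_eq_abs, abs_of_pos hp]; exact hp1)
    exact ((tendsto_add_atTop_iff_nat 1).2 h).comp t1
  have hup : ∀ᶠ v : ℕ × ℂ in atTop ×ˢ nhds y, ‖v.2‖ < ‖y‖ + 1 :=
    t2.norm.eventually_lt_const (by linarith)
  have hlo : ∀ᶠ v : ℕ × ℂ in atTop ×ˢ nhds y, ‖y‖ / 2 < ‖v.2‖ :=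
    t2.norm.eventually_const_lt (by linarith)
  refine Tendsto.mul ?_ ?_
  · refine tendsto_tprod_one_add_of_dominated_convergence
      (bound := fun i => p ^ i * (‖a‖ * (‖y‖ + 2))) (summable_pow_mul hp hp1 _) (fun i => ?_) ?_
    · have := ((t2.add tp).const_mul a).const_mul ((p : ℂ) ^ i)
      rw [add_zero] at this
      exact this.neg
    · filter_upwards [hup] with v hv i
      rw [norm_neg, norm_mul, norm_mul, hnp]
      have h1 : ‖v.2 + (p : ℂ) ^ (v.1 + 1)‖ ≤ ‖y‖ + 2 := by
        refine (norm_add_le _ _).trans ?_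
        rw [hnp]
        have : p ^ (v.1 + 1) ≤ 1 := pow_le_one₀ hp.le hp1.le
        linarith
      gcongr
  · have hfin : ∀ v : ℕ × ℂ, ∏ k ∈ Finset.range v.1,
        (1 + -(((p : ℂ) ^ (k + 1) / a - (p : ℂ) ^ (v.1 + 1)) / v.2))
        = ∏' k : ℕ, (1 + if k < v.1 then
            -(((p : ℂ) ^ (k + 1) / a - (p : ℂ) ^ (v.1 + 1)) / v.2) else 0) := by
      intro v
      rw [tprod_eq_prod (s := Finset.range v.1)]
      · refine Finset.prod_congr rfl fun k hk => ?_
        rw [if_pos (Finset.mem_range.1 hk)]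
      · intro k hk
        rw [if_neg (by simpa using hk), add_zero]
    simp only [hfin]
    refine tendsto_tprod_one_add_of_dominated_convergence
      (bound := fun k => p ^ k * ((‖a‖⁻¹ + 1) / (‖y‖ / 2))) (summable_pow_mul hp hp1 _)
      (fun k => ?_) ?_
    · have h := ((tendsto_const_nhds (x := (p : ℂ) ^ (k + 1) / a)).sub tp).div t2 hy |>.neg
      rw [sub_zero, div_div] at h
      refine h.congr' ?_
      filter_upwards [t1.eventually_gt_atTop k] with v hv
      rw [if_pos hv]
      rfl
    · filter_upwards [hlo] with v hv k
      split_ifs with hk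
      · rw [norm_neg, norm_div, ← mul_div_assoc]
        have h1 : ‖(p : ℂ) ^ (k + 1) / a - (p : ℂ) ^ (v.1 + 1)‖ ≤ p ^ k * (‖a‖⁻¹ + 1) := by
          refine (norm_sub_le _ _).trans ?_
          rw [norm_div, hnp, hnp, mul_add, mul_one, div_eq_mul_inv]
          have e1 : p ^ (k + 1) ≤ p ^ k := pow_le_pow_of_le_one hp.le hp1.le (by omega)
          have e2 : p ^ (v.1 + 1) ≤ p ^ k := pow_le_pow_of_le_one hp.le hp1.le (by omega)
          gcongr
        gcongr
      · rw [norm_zero]; positivity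

/-- The zeros of the theta product lie in `p^ℤ`. -/
lemma thProd_ne_zero {p : ℝ} (hp : 0 < p) (hp1 : p < 1) {y : ℂ}
    (h : ∀ m : ℤ, y ≠ (p : ℂ) ^ m) : thProd p y ≠ 0 := by
  have hp' : (p : ℂ) ≠ 0 := by exact_mod_cast hp.ne'
  refine mul_ne_zero (tprod_one_add_ne_zero_of_summable (fun i h0 => ?_)
    (summable_norm_pow_mul hp hp1 y)) (tprod_one_add_ne_zero_of_summable (fun i h0 => ?_)
    (summable_norm_pow_div hp hp1 y))
  · apply h (-(i : ℤ))
    rw [zpow_neg, zpow_natCast]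
    refine eq_inv_of_mul_eq_one_left ?_
    linear_combination -h0
  · apply h ((i + 1 : ℕ) : ℤ)
    rw [zpow_natCast]
    have hy : y ≠ 0 := by rintro rfl; simp at h0
    field_simp at h0
    linear_combination h0

/-! ### Locally uniform convergence -/

/-- Continuous convergence on `K` implies locally uniform convergence on `K`; continuity of the
limit is automatic. -/
lemma tendstoLocallyUniformlyOn_of_joint {F : ℕ → ℂ → ℂ} {f : ℂ → ℂ} {K : Set ℂ}
    (h : ∀ x ∈ K, Tendsto (fun v : ℕ × ℂ => F v.1 v.2) (atTop ×ˢ nhdsWithin x K) (nhds (f x))) :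
    TendstoLocallyUniformlyOn F f atTop K := by
  rw [Metric.tendstoLocallyUniformlyOn_iff]
  intro ε hε x hx
  have h1 := (h x hx).eventually (Metric.ball_mem_nhds (f x) (by positivity : 0 < ε / 3))
  rw [eventually_prod_iff] at h1
  obtain ⟨pa, hpa, pb, hpb, hab⟩ := h1
  refine ⟨{y | pb y} ∩ K, inter_mem hpb self_mem_nhdsWithin, hpa.mono fun n hn y hy => ?_⟩
  have h2 : Tendsto (fun n => F n y) atTop (nhds (f y)) :=
    (h y hy.2).comp (tendsto_id.prodMk
      (tendsto_nhdsWithin_iff.2 ⟨tendsto_const_nhds, Eventually.of_forall fun _ => hy.2⟩))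
  have h3 : dist (f y) (f x) ≤ ε / 3 := by
    refine le_of_tendsto (h2.dist tendsto_const_nhds) (hpa.mono fun m hm => ?_)
    exact (Metric.mem_ball.1 (hab hm hy.1)).le
  have h4 : dist (F n y) (f x) < ε / 3 := Metric.mem_ball.1 (hab hn hy.1)
  calc dist (f y) (F n y) ≤ dist (f y) (f x) + dist (F n y) (f x) := dist_triangle_right _ _ _
    _ < ε := by linarith

/-! ### The confluence theorem -/

lemma theta_eq {q : ℝ} (y : ℂ) : theta q y = ∑' m, thTerm q⁻¹ y m := by
  refine tsum_congr fun m => ?_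
  rw [thTerm, zpow_neg, Complex.ofReal_inv, inv_zpow]

/-- Whenever the denominator does not vanish, the character is the quotient of the normalised
products: the dominant parts cancel against the prefactor `(p^{ξ+n})^c`. -/
lemma echar_eq {q : ℝ} (hq : 1 < q) (c : ℂ) (ξ : ℝ) (n : ℕ) {x : ℂ} (hx : x ≠ 0)
    (hne : shProd q⁻¹ (Complex.exp (c * Real.log q⁻¹)) n (((q⁻¹ ^ (-ξ) : ℝ) : ℂ) * x) ≠ 0) :
    echar q ((1 - q⁻¹) * Real.rpow q⁻¹ (ξ + n)) c x
      = Complex.exp ((ξ : ℂ) * c * Real.log q⁻¹) *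
        shProd q⁻¹ 1 n (((q⁻¹ ^ (-ξ) : ℝ) : ℂ) * x) /
        shProd q⁻¹ (Complex.exp (c * Real.log q⁻¹)) n (((q⁻¹ ^ (-ξ) : ℝ) : ℂ) * x) := by
  have hp : 0 < q⁻¹ := by positivity
  have hp1 : q⁻¹ < 1 := inv_lt_one_of_one_lt₀ hq
  have hqc : (q : ℂ)⁻¹ = ((q⁻¹ : ℝ) : ℂ) := by push_cast; rfl
  set p : ℝ := q⁻¹
  set a : ℂ := Complex.exp (c * Real.log p) with hadef
  have ha : a ≠ 0 := Complex.exp_ne_zero _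
  have hp' : (p : ℂ) ≠ 0 := by exact_mod_cast hp.ne'
  set y : ℂ := ((p ^ (-ξ) : ℝ) : ℂ) * x with hydef
  have hr : ((p ^ (-ξ) : ℝ) : ℂ) ≠ 0 := by exact_mod_cast (Real.rpow_pos_of_pos hp _).ne'
  have hy : y ≠ 0 := mul_ne_zero hr hx
  set h : ℝ := (1 - p) * Real.rpow p (ξ + n) with hh
  have h1p : (1 - p) ≠ 0 := by linarith
  have h1p' : (1 - (p : ℂ)) ≠ 0 := by exact_mod_cast h1p
  have hpos : 0 < p ^ (ξ + n) := Real.rpow_pos_of_pos hp _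
  have hexp : ∀ j : ℕ, Complex.exp (((j : ℂ) + c) * Real.log p) = (p : ℂ) ^ j * a := by
    intro j
    rw [add_mul, Complex.exp_add, Complex.exp_nat_mul, ← Complex.ofReal_exp, Real.exp_log hp]
  have hz : (p : ℂ) ^ n * zc q h x = y + (p : ℂ) ^ (n + 1) := by
    have e1 : p ^ n = p ^ (-ξ) * p ^ (ξ + n) := by
      rw [← Real.rpow_add hp, neg_add_cancel_left, Real.rpow_natCast]
    have e2 : (p : ℂ) ^ n = ((p ^ (-ξ) : ℝ) : ℂ) * ((p ^ (ξ + n) : ℝ) : ℂ) := by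
      rw [← Complex.ofReal_pow, e1, Complex.ofReal_mul]
    have e3 : ((p ^ (ξ + n) : ℝ) : ℂ) ≠ 0 := by exact_mod_cast hpos.ne'
    rw [zc, hqc, mul_add, ← pow_succ, e2, hh, Complex.ofReal_mul]
    change _ * ((1 - (p : ℂ)) * x / (((1 - p : ℝ) : ℂ) * ((p ^ (ξ + n) : ℝ) : ℂ))) + _ = _
    rw [Complex.ofReal_sub, Complex.ofReal_one, hydef]
    congr 1
    field_simp
  have hpre : ((h / (1 - p) : ℝ) : ℂ) ^ c = Complex.exp ((ξ : ℂ) * c * Real.log p) * a ^ n := by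
    have : h / (1 - p) = p ^ (ξ + n) := by
      rw [hh, mul_div_cancel_left₀ _ h1p]; rfl
    rw [this, Complex.cpow_def_of_ne_zero (by exact_mod_cast hpos.ne'),
      ← Complex.ofReal_log hpos.le, Real.log_rpow hp, hadef, ← Complex.exp_nat_mul,
      ← Complex.exp_add]
    congr 1; push_cast; ring
  have hN := tprod_eq_shProd hp hp1 (a := 1) one_ne_zero hy n hz
  have hD := tprod_eq_shProd hp hp1 ha hy n hz
  have hcne : (∏ k ∈ Finset.range n, (-(1 * y) / (p : ℂ) ^ (k + 1))) ≠ 0 :=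
    Finset.prod_ne_zero_iff.2 fun k _ => by
      rw [one_mul]; exact div_ne_zero (neg_ne_zero.2 hy) (pow_ne_zero _ hp')
  have hc : (∏ k ∈ Finset.range n, (-(a * y) / (p : ℂ) ^ (k + 1)))
      = a ^ n * ∏ k ∈ Finset.range n, (-(1 * y) / (p : ℂ) ^ (k + 1)) := by
    rw [← Finset.card_range n, ← Finset.prod_const, Finset.card_range, ← Finset.prod_mul_distrib]
    exact Finset.prod_congr rfl fun k _ => by ring
  have hprod : ∏' j : ℕ, charTerm q h c x j
      = (∏' j : ℕ, (1 + -((p : ℂ) ^ j * (1 * zc q h x)))) /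
        ∏' j : ℕ, (1 + -((p : ℂ) ^ j * (a * zc q h x))) := by
    have m1 := (multipliable_one_add_of_summable
      (summable_norm_pow_mul hp hp1 (1 * zc q h x))).hasProd
    have m2 := (multipliable_one_add_of_summable
      (summable_norm_pow_mul hp hp1 (a * zc q h x))).hasProd
    have hDne : ∏' j : ℕ, (1 + -((p : ℂ) ^ j * (a * zc q h x))) ≠ 0 := by
      rw [hD, hc]
      exact mul_ne_zero (mul_ne_zero (pow_ne_zero _ ha) hcne) hne
    have m3 := Tendsto.div m1 m2 hDne
    refine HasProd.tprod_eq (Tendsto.congr (fun s => ?_) m3)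
    rw [Pi.div_apply, ← Finset.prod_div_distrib]
    refine Finset.prod_congr rfl fun j _ => ?_
    rw [charTerm, hexp, hqc]
    ring_nf
  rw [echar, hprod, hN, hD, hc, hpre]
  have han : a ^ n ≠ 0 := pow_ne_zero _ ha
  generalize (∏ k ∈ Finset.range n, (-(1 * y) / (p : ℂ) ^ (k + 1))) = d at hcne ⊢
  field_simp

/-- Along the sequence `h_n = (1-p₀)p₀^{ξ+n}` (with `ξ ∈ [0,1)` fixed), the characters
`e_c^{(q₀,h_n)}` converge, uniformly on compact subsets of `ℂ ∖ q₀^c·[0,∞)`, to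
`x ↦ p₀^{ξc}·Θ_{q₀}(p₀^{-ξ}x)/Θ_{q₀}(p₀^{c-ξ}x)`. -/
theorem echar_confluence_C1 (q0 : ℝ) (hq0 : 1 < q0) (c : ℂ) (ξ : ℝ)
    (hξ0 : 0 ≤ ξ) (hξ1 : ξ < 1)
    (K : Set ℂ) (hK : IsCompact K)
    (hKd : ∀ x ∈ K, ∀ t : ℝ, 0 ≤ t → x ≠ Complex.exp (c * Real.log q0) * (t : ℂ)) :
    TendstoUniformlyOn
      (fun (n : ℕ) (x : ℂ) => echar q0 ((1 - q0⁻¹) * Real.rpow q0⁻¹ (ξ + n)) c x)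
      (fun x : ℂ => Complex.exp ((ξ : ℂ) * c * Real.log q0⁻¹) *
        theta q0 (((Real.rpow q0⁻¹ (-ξ) : ℝ) : ℂ) * x) /
        theta q0 (Complex.exp ((c - (ξ : ℂ)) * Real.log q0⁻¹) * x))
      atTop K := by
  rw [← tendstoLocallyUniformlyOn_iff_tendstoUniformlyOn_of_compact hK]
  refine tendstoLocallyUniformlyOn_of_joint fun x hx => ?_
  have hp : 0 < q0⁻¹ := by positivity
  have hp1 : q0⁻¹ < 1 := inv_lt_one_of_one_lt₀ hq0
  have hx0 : x ≠ 0 := by simpa using hKd x hx 0 le_rfl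
  obtain ⟨L, hL, hth⟩ := triple_product hp hp1
  have hlog : Real.log q0 = -Real.log q0⁻¹ := by rw [Real.log_inv, neg_neg]
  rw [hlog] at hKd
  simp only [theta_eq]
  change Tendsto _ _ (nhds (_ * (∑' m, thTerm q0⁻¹ (((q0⁻¹ ^ (-ξ) : ℝ) : ℂ) * x) m) / _))
  set p : ℝ := q0⁻¹
  set a : ℂ := Complex.exp (c * Real.log p) with hadef
  have ha : a ≠ 0 := Complex.exp_ne_zero _
  set r : ℂ := ((p ^ (-ξ) : ℝ) : ℂ) with hrdef
  have hr : r ≠ 0 := by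
    rw [hrdef]; exact_mod_cast (Real.rpow_pos_of_pos hp _).ne'
  have hy : r * x ≠ 0 := mul_ne_zero hr hx0
  have har : Complex.exp ((c - (ξ : ℂ)) * Real.log p) * x = a * (r * x) := by
    rw [← mul_assoc, hadef, hrdef, Real.rpow_def_of_pos hp, Complex.ofReal_exp, ← Complex.exp_add]
    congr 2; push_cast; ring
  rw [har, hth _ hy, hth _ (mul_ne_zero ha hy), mul_left_comm, mul_div_mul_left _ _ hL]
  -- a zero of the denominator would be `x = q₀^c p^{ξ+m}`, on the excluded ray
  have hne : thProd p (a * (r * x)) ≠ 0 := by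
    refine thProd_ne_zero hp hp1 fun m hm => ?_
    refine hKd x hx (p ^ (ξ + m)) (Real.rpow_pos_of_pos hp _).le ?_
    have e1 : Complex.exp (c * ((-Real.log p : ℝ) : ℂ)) = a⁻¹ := by
      rw [hadef, ← Complex.exp_neg]; congr 1; push_cast; ring
    have e2 : ((p ^ (ξ + m) : ℝ) : ℂ) = r⁻¹ * (p : ℂ) ^ m := by
      rw [Real.rpow_add hp, Real.rpow_intCast, hrdef, Real.rpow_neg hp.le]
      push_cast; rw [inv_inv]
    rw [e1, e2, ← hm]
    field_simp
  have tmap : Tendsto (fun v : ℕ × ℂ => (v.1, r * v.2)) (atTop ×ˢ nhdsWithin x K)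
      (atTop ×ˢ nhds (r * x)) :=
    tendsto_fst.prodMk ((tendsto_snd.mono_right nhdsWithin_le_nhds).const_mul r)
  have tN := (tendsto_shProd hp hp1 one_ne_zero hy).comp tmap
  have tD := (tendsto_shProd hp hp1 ha hy).comp tmap
  rw [one_mul] at tN
  refine ((tN.const_mul (Complex.exp ((ξ : ℂ) * c * Real.log p))).div tD hne).congr' ?_
  have hx' : ∀ᶠ v : ℕ × ℂ in atTop ×ˢ nhdsWithin x K, v.2 ≠ 0 :=
    (tendsto_snd.mono_right nhdsWithin_le_nhds).eventually_ne hx0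
  filter_upwards [tD.eventually_ne hne, hx'] with v hv hv0
  exact (echar_eq hq0 c ξ v.1 hv0 hv).symm
end
end

section
/- Let c ∈ ℂ and ℓ ∈ (0, +∞]. Let (q_n) and (h_n) be sequences of reals with q_n > 1, h_n > 0, q_n → 1, h_n → 0 and h_n/(q_n − 1) → ℓ. Then the functions e_c^{(q_n,h_n)} converge, uniformly on every compact subset of ℂ ∖ [0,+∞), to the function x ↦ exp(c·Log(−x)), the principal branch of (−x)^c. -/
/-!
Write `p = 1/q`, `z = z(x)` and `f_j = 1 - p^j z = (1 - p^(j+1)) + p^j ((1 - p)/h) (-x)`.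
The product defining the character is a discretisation of `(1 - z)^c`: its `j`-th factor is close
to `(f_j / f_{j+1})^c`, and `∏ f_j / f_{j+1}` telescopes to `f_0 = 1 - z`. Since
`h/(1 - p) · (1 - z) = h - x`, the character is close to `(h - x)^c`, hence to `(-x)^c`.

For the error, a compact `K` avoiding `[0, ∞)` satisfies `|a + b (-x)| ≥ κ (a + b)` for `a, b ≥ 0`
(`exists_sector_bound`), so `|f_j|` is bounded below by a multiple of
`D_j = 1 - p^(j+1) + p^j θ` with `θ = r (1 - p)/h`. The logarithms of the `j`-th factor and of
`(f_j / f_{j+1})^c` differ by `O((1 - p)² p^j / D_j²)`, a sequence dominated by the telescoping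
differences of `8 (1 - p) / D_j`, whose sum is at most `8 (1 - p)/θ = 8 h / r`
(`sum_lowD_le`, `tprod_eq_exp`). The total error in the exponent is therefore `O(h)` uniformly on
`K` (`echar_eq_exp`). No branch jumps occur because all `f_j` and `-x` lie in the slit plane, in
one closed half-plane (`log_sub_log_of_ray`). The limit `ℓ > 0` enters only through
a lower bound for `h/(q - 1)`, which keeps `z` bounded and `θ` below `1/4`.
-/

open Complex Filter

noncomputable section

/-! ### The real comparison sequence -/

/-- The comparison sequence `D_j = 1 - p^(j+1) + p^j θ`. Up to a constant factor it bounds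
`|1 - p^j z(x)|` from below, uniformly for `x` in the compact set, when `θ` is a small multiple of
`(1 - p)/h`. -/
def lowD (p θ : ℝ) (j : ℕ) : ℝ := 1 - p ^ (j + 1) + p ^ j * θ

lemma lowD_ge {p θ : ℝ} (hp0 : 1 / 2 ≤ p) (hp1 : p < 1) (hθ : 0 < θ) (hθ1 : θ ≤ 1 / 4) (j : ℕ) :
    θ ≤ lowD p θ j := by
  have h1 : p ^ j ≤ 1 := pow_le_one₀ (by linarith) hp1.le
  have h2 : 0 < p ^ j := by positivity
  unfold lowD
  rw [pow_succ]
  nlinarith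

lemma lowD_le {p θ : ℝ} (hp0 : 1 / 2 ≤ p) (hp1 : p < 1) (hθ : 0 < θ) (hθ1 : θ ≤ 1 / 4) (j : ℕ) :
    lowD p θ j ≤ 2 := by
  have h1 : p ^ j ≤ 1 := pow_le_one₀ (by linarith) hp1.le
  have h2 : 0 < p ^ j := by positivity
  have h3 : 0 < p ^ (j + 1) := by positivity
  unfold lowD
  nlinarith

/-- The telescoping estimate: `D_{j+1} - D_j = p^j (1 - p)(p - θ) ≥ p^j (1 - p)/4`, while
`D_{j+1} ≤ 2 D_j`. -/
lemma lowD_step {p θ : ℝ} (hp0 : 1 / 2 ≤ p) (hp1 : p < 1) (hθ : 0 < θ) (hθ1 : θ ≤ 1 / 4) (j : ℕ) :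
    (1 - p) ^ 2 * p ^ j / lowD p θ j ^ 2
      ≤ 8 * (1 - p) * ((lowD p θ j)⁻¹ - (lowD p θ (j + 1))⁻¹) := by
  have hD := hθ.trans_le (lowD_ge hp0 hp1 hθ hθ1 j)
  have hD' := hθ.trans_le (lowD_ge hp0 hp1 hθ hθ1 (j + 1))
  have h1 : p ^ j ≤ 1 := pow_le_one₀ (by linarith) hp1.le
  have h2 : 0 < p ^ j := by positivity
  have hs : 0 < 1 - p := by linarith
  have hdiff : lowD p θ (j + 1) - lowD p θ j = p ^ j * (1 - p) * (p - θ) := by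
    unfold lowD; ring
  have hlow : 1 - p ≤ lowD p θ j := by
    have : p ^ (j + 1) ≤ p := by rw [pow_succ]; nlinarith
    have : 0 < p ^ j * θ := by positivity
    unfold lowD; linarith
  have hw : 0 < p ^ j * (1 - p) := by positivity
  have hle : lowD p θ (j + 1) ≤ 2 * lowD p θ j := by
    have : p ^ j * (1 - p) * (p - θ) ≤ p ^ j * (1 - p) * 1 :=
      mul_le_mul_of_nonneg_left (by linarith) hw.le
    nlinarith
  have hge : p ^ j * (1 - p) * (1 / 4) ≤ lowD p θ (j + 1) - lowD p θ j := by
    rw [hdiff]; exact mul_le_mul_of_nonneg_left (by linarith) hw.le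
  have e : (lowD p θ j)⁻¹ - (lowD p θ (j + 1))⁻¹
      = (lowD p θ (j + 1) - lowD p θ j) / (lowD p θ j * lowD p θ (j + 1)) := by
    field_simp
  have key : p ^ j * (1 - p) * (1 / 4) / (lowD p θ j * (2 * lowD p θ j))
      ≤ (lowD p θ j)⁻¹ - (lowD p θ (j + 1))⁻¹ := by
    rw [e]
    have : 0 ≤ lowD p θ (j + 1) - lowD p θ j := by linarith
    gcongr
  calc (1 - p) ^ 2 * p ^ j / lowD p θ j ^ 2
      = 8 * (1 - p) * (p ^ j * (1 - p) * (1 / 4) / (lowD p θ j * (2 * lowD p θ j))) := by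
        field_simp; norm_num
    _ ≤ _ := mul_le_mul_of_nonneg_left key (by positivity)

lemma sum_lowD_le {p θ : ℝ} (hp0 : 1 / 2 ≤ p) (hp1 : p < 1) (hθ : 0 < θ) (hθ1 : θ ≤ 1 / 4)
    (N : ℕ) :
    ∑ j ∈ Finset.range N, (1 - p) ^ 2 * p ^ j / lowD p θ j ^ 2 ≤ 8 * ((1 - p) / θ) := by
  have hs : 0 < 1 - p := by linarith
  have h0 := lowD_ge hp0 hp1 hθ hθ1 0
  have hN := hθ.trans_le (lowD_ge hp0 hp1 hθ hθ1 N)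
  calc _ ≤ ∑ j ∈ Finset.range N, 8 * (1 - p) * ((lowD p θ j)⁻¹ - (lowD p θ (j + 1))⁻¹) :=
        Finset.sum_le_sum fun j _ => lowD_step hp0 hp1 hθ hθ1 j
    _ = 8 * (1 - p) * ((lowD p θ 0)⁻¹ - (lowD p θ N)⁻¹) := by
        rw [← Finset.mul_sum, Finset.sum_range_sub']
    _ ≤ 8 * (1 - p) * θ⁻¹ := by
        have h1 : (lowD p θ 0)⁻¹ ≤ θ⁻¹ := inv_anti₀ hθ h0
        have h2 : 0 < (lowD p θ N)⁻¹ := by positivity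
        exact mul_le_mul_of_nonneg_left (by linarith) (by positivity)
    _ = _ := by ring

/-! ### Estimates for complex logarithms -/

lemma norm_log_sub_le {u : ℂ} (hu : ‖u‖ ≤ 1 / 2) : ‖log (1 + u) - u‖ ≤ ‖u‖ ^ 2 := by
  have h := Complex.norm_log_one_add_sub_self_le (z := u) (by linarith)
  have h2 : (1 - ‖u‖)⁻¹ ≤ 2 := by
    rw [inv_le_comm₀ (by linarith) (by norm_num)]; linarith
  have h3 : 0 ≤ ‖u‖ ^ 2 := by positivity
  nlinarith

/-- `1 - p^c = c (1 - p) + O((1 - p)²)`. -/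
lemma norm_one_sub_cpow_le (c : ℂ) {p : ℝ} (hp0 : 1 / 2 ≤ p) (hp1 : p < 1)
    (hc : ‖c‖ * (2 * (1 - p)) ≤ 1) :
    ‖1 - exp (c * Real.log p) - c * (1 - p : ℝ)‖ ≤ (4 * ‖c‖ ^ 2 + ‖c‖) * (1 - p) ^ 2 := by
  have hs : 0 < 1 - p := by linarith
  have hu : ‖(((p - 1 : ℝ)) : ℂ)‖ = 1 - p := by
    rw [Complex.norm_real, Real.norm_eq_abs, abs_of_neg (by linarith)]; ring
  have h1 := norm_log_sub_le (u := ((p - 1 : ℝ) : ℂ)) (by rw [hu]; linarith)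
  have e1 : (1 : ℂ) + ((p - 1 : ℝ) : ℂ) = (p : ℂ) := by push_cast; ring
  rw [hu, e1, ← Complex.ofReal_log (by linarith)] at h1
  have h2 : ‖((Real.log p : ℝ) : ℂ)‖ ≤ 2 * (1 - p) := by
    have := norm_le_norm_add_norm_sub' ((Real.log p : ℝ) : ℂ) ((p - 1 : ℝ) : ℂ)
    rw [hu] at this
    nlinarith
  have h3 : ‖c * (Real.log p : ℝ)‖ ≤ ‖c‖ * (2 * (1 - p)) := by
    rw [norm_mul]; gcongr
  have h4 := Complex.norm_exp_sub_one_sub_id_le (h3.trans hc)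
  have e : 1 - exp (c * Real.log p) - c * (1 - p : ℝ)
      = -(exp (c * Real.log p) - 1 - c * Real.log p)
        - c * ((Real.log p : ℝ) - ((p - 1 : ℝ) : ℂ)) := by push_cast; ring
  rw [e]
  calc _ ≤ ‖exp (c * Real.log p) - 1 - c * Real.log p‖
        + ‖c * ((Real.log p : ℝ) - ((p - 1 : ℝ) : ℂ))‖ := by
        refine (norm_sub_le _ _).trans ?_
        rw [norm_neg]
    _ ≤ (‖c‖ * (2 * (1 - p))) ^ 2 + ‖c‖ * (1 - p) ^ 2 := by
        rw [norm_mul c]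
        gcongr
        exact h4.trans (by gcongr)
    _ = _ := by ring

/-- Principal logarithms subtract without a branch jump along `a + b w`, `a ≥ 0`, `b > 0`: all
these points lie in the slit plane and their imaginary parts have the sign of `w.im`, so two of
their arguments differ by less than `π`. -/
lemma log_sub_log_of_ray {w : ℂ} (hw : w ∈ slitPlane) {a b a' b' : ℝ} (ha : 0 ≤ a) (hb : 0 < b)
    (ha' : 0 ≤ a') (hb' : 0 < b') :
    (a + b * w : ℂ) ≠ 0 ∧
    log ((a' + b' * w) / (a + b * w)) = log (a' + b' * w) - log (a + b * w) := by
  have slit : ∀ {a b : ℝ}, 0 ≤ a → 0 < b → (a + b * w : ℂ) ∈ slitPlane := by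
    intro a b ha hb
    rw [Complex.mem_slitPlane_iff] at hw ⊢
    simp only [add_re, ofReal_re, mul_re, ofReal_im, zero_mul, sub_zero, add_im, mul_im, zero_add,
      add_zero]
    rcases hw with h | h
    · left; positivity
    · right; positivity
  have s1 := slit ha hb
  have s2 := slit ha' hb'
  have n1 := Complex.slitPlane_ne_zero s1
  have n2 := Complex.slitPlane_ne_zero s2
  refine ⟨n1, ?_⟩
  have a1 := (Complex.mem_slitPlane_iff_arg.1 s1).1
  have a2 := (Complex.mem_slitPlane_iff_arg.1 s2).1
  have l1 := Complex.neg_pi_lt_arg (a + b * w : ℂ)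
  have l2 := Complex.neg_pi_lt_arg (a' + b' * w : ℂ)
  have r1 := lt_of_le_of_ne (Complex.arg_le_pi (a + b * w : ℂ)) a1
  have r2 := lt_of_le_of_ne (Complex.arg_le_pi (a' + b' * w : ℂ)) a2
  have im : ∀ a b : ℝ, (a + b * w : ℂ).im = b * w.im := by intro a b; simp
  have hh : -Real.pi < (log (a' + b' * w) - log (a + b * w)).im ∧
      (log (a' + b' * w) - log (a + b * w)).im ≤ Real.pi := by
    rw [Complex.sub_im, Complex.log_im, Complex.log_im]
    rcases le_or_gt 0 w.im with h | h
    · have p1 : 0 ≤ arg (a + b * w : ℂ) := Complex.arg_nonneg_iff.2 (by rw [im]; positivity)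
      have p2 : 0 ≤ arg (a' + b' * w : ℂ) := Complex.arg_nonneg_iff.2 (by rw [im]; positivity)
      constructor <;> linarith
    · have p1 : arg (a + b * w : ℂ) < 0 :=
        Complex.arg_neg_iff.2 (by rw [im]; exact mul_neg_of_pos_of_neg hb h)
      have p2 : arg (a' + b' * w : ℂ) < 0 :=
        Complex.arg_neg_iff.2 (by rw [im]; exact mul_neg_of_pos_of_neg hb' h)
      constructor <;> linarith
  rw [← Complex.log_exp hh.1 hh.2, Complex.exp_sub, Complex.exp_log n1, Complex.exp_log n2]

/-- On a compact set avoiding `[0, ∞)` the points `-x` stay in a sector around the positive axis,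
so `a + b (-x)` cannot cancel. By homogeneity it suffices to minimise over `a + b = 1`. -/
lemma exists_sector_bound {K : Set ℂ} (hK : IsCompact K)
    (hKd : ∀ x ∈ K, ∀ t : ℝ, 0 ≤ t → x ≠ (t : ℂ)) :
    ∃ κ : ℝ, 0 < κ ∧ ∀ x ∈ K, ∀ a b : ℝ, 0 ≤ a → 0 ≤ b → κ * (a + b) ≤ ‖(a + b * (-x) : ℂ)‖ := by
  rcases K.eq_empty_or_nonempty with rfl | hne
  · exact ⟨1, one_pos, by simp⟩
  have hc : IsCompact (K ×ˢ Set.Icc (0 : ℝ) 1) := hK.prod isCompact_Icc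
  obtain ⟨⟨x₀, t₀⟩, ⟨hx₀, ht₀⟩, hmin⟩ := hc.exists_isMinOn
    (f := fun y : ℂ × ℝ => ‖((y.2 : ℂ) + ((1 - y.2 : ℝ) : ℂ) * (-y.1))‖)
    (hne.prod ⟨0, by simp⟩) (by fun_prop)
  refine ⟨‖((t₀ : ℂ) + ((1 - t₀ : ℝ) : ℂ) * (-x₀))‖, norm_pos_iff.2 ?_,
    fun x hx a b ha hb => ?_⟩
  · intro h0
    simp only at ht₀ hx₀
    rcases eq_or_lt_of_le ht₀.2 with h1 | h1
    · rw [h1] at h0; simp at h0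
    · have : (1 : ℂ) - t₀ ≠ 0 := by
        have : (1 : ℝ) - t₀ ≠ 0 := by linarith
        exact_mod_cast this
      refine hKd x₀ hx₀ (t₀ / (1 - t₀)) (div_nonneg ht₀.1 (by linarith)) ?_
      push_cast at h0 ⊢
      field_simp
      linear_combination -h0
  · rcases eq_or_lt_of_le (add_nonneg ha hb) with h | h
    · rw [← h]; simp
    · have hm := hmin (a := (x, a / (a + b)))
        ⟨hx, by constructor; positivity; rw [div_le_one h]; linarith⟩
      simp only [Set.mem_ofPred_eq] at hm
      have hab : ((a : ℂ) + b) ≠ 0 := by exact_mod_cast h.ne'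
      have e : (a + b * (-x) : ℂ) = ((a + b : ℝ) : ℂ) *
          (((a / (a + b) : ℝ) : ℂ) + ((1 - a / (a + b) : ℝ) : ℂ) * (-x)) := by
        push_cast; field_simp; ring
      rw [e, norm_mul, Complex.norm_real, Real.norm_of_nonneg h.le, mul_comm]
      gcongr

/-! ### The infinite product -/

/-- The infinite product equals `(1 - z)^c` up to a factor `exp E`, with `E = O((1 - p)/θ)`.

Put `f_j = 1 - p^j z`, `P = p^c` and `w_j = p^j z / f_j`. The `j`-th factor is
`1 / (1 + (1 - P) w_j)`, whereas `1 + (1 - p) w_j = f_{j+1} / f_j`, so that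
`∑ log (1 + (1 - p) w_j)` telescopes to `-log f_0`. The differences
`log (1 + (1 - P) w_j) - c log (1 + (1 - p) w_j)` are `O((1 - p)² p^j / D_j²)`, and the sum of these
is controlled by `sum_lowD_le`. -/
lemma tprod_eq_exp (c z : ℂ) {p θ C : ℝ} (hp0 : 1 / 2 ≤ p) (hp1 : p < 1) (hθ : 0 < θ)
    (hθ1 : θ ≤ 1 / 4) (hC : 0 ≤ C) (hc : ‖c‖ * (2 * (1 - p)) ≤ 1)
    (hf : ∀ j : ℕ, 1 - (p : ℂ) ^ j * z ≠ 0)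
    (hlow : ∀ j : ℕ, ‖z‖ / ‖1 - (p : ℂ) ^ j * z‖ ≤ C / lowD p θ j)
    (hlog : ∀ j : ℕ, log ((1 - (p : ℂ) ^ (j + 1) * z) / (1 - (p : ℂ) ^ j * z))
      = log (1 - (p : ℂ) ^ (j + 1) * z) - log (1 - (p : ℂ) ^ j * z))
    (hB : C * ((1 - p) / θ) ≤ 1 / 2)
    (hGB : (4 * ‖c‖ ^ 2 + 2 * ‖c‖) * (C * ((1 - p) / θ)) ≤ 1 / 2) :
    ∃ E : ℂ, ‖E‖ ≤ (((4 * ‖c‖ ^ 2 + 2 * ‖c‖) ^ 2 + ‖c‖) * C ^ 2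
        + 2 * (4 * ‖c‖ ^ 2 + ‖c‖) * C) * (8 * ((1 - p) / θ)) ∧
      ∏' j : ℕ, (1 - (p : ℂ) ^ j * z) / (1 - exp (((j : ℂ) + c) * Real.log p) * z)
        = exp (c * log (1 - z) + E) := by
  set G := 4 * ‖c‖ ^ 2 + 2 * ‖c‖ with hG
  set C1 := 4 * ‖c‖ ^ 2 + ‖c‖ with hC1
  have hG0 : 0 ≤ G := by positivity
  have hC10 : 0 ≤ C1 := by positivity
  have hs : 0 < 1 - p := by linarith
  have hp : 0 < p := by linarith
  set P := exp (c * Real.log p) with hP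
  set f : ℕ → ℂ := fun j => 1 - (p : ℂ) ^ j * z with hfdef
  set w : ℕ → ℂ := fun j => (p : ℂ) ^ j * z / f j with hw
  have hD : ∀ j, 0 < lowD p θ j := fun j => hθ.trans_le (lowD_ge hp0 hp1 hθ hθ1 j)
  have hsc : ‖((1 - p : ℝ) : ℂ)‖ = 1 - p := by
    rw [Complex.norm_real, Real.norm_of_nonneg hs.le]
  have hγ := norm_one_sub_cpow_le c hp0 hp1 hc
  rw [← hP, ← hC1] at hγ
  have hP1 : ‖1 - P‖ ≤ G * (1 - p) := by
    have h := norm_le_norm_add_norm_sub' (1 - P) (c * (1 - p : ℝ))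
    rw [norm_mul, hsc] at h
    have : C1 * (1 - p) ^ 2 ≤ C1 * (1 - p) :=
      mul_le_mul_of_nonneg_left (by nlinarith) hC10
    have e : G = C1 + ‖c‖ := by rw [hG, hC1]; ring
    rw [e]; linarith
  have hwD : ∀ j, ‖w j‖ ≤ C * (p ^ j / lowD p θ j) := by
    intro j
    have h1 := hlow j
    have : ‖w j‖ = p ^ j * (‖z‖ / ‖f j‖) := by
      rw [hw]
      simp only [norm_div, norm_mul, norm_pow, Complex.norm_real, Real.norm_of_nonneg hp.le]
      ring
    rw [this]
    calc p ^ j * (‖z‖ / ‖f j‖) ≤ p ^ j * (C / lowD p θ j) := by gcongr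
      _ = _ := by ring
  have hpj : ∀ j, p ^ j ≤ 1 := fun j => pow_le_one₀ hp.le hp1.le
  have hgeo : ∀ j, (1 - p) * ‖w j‖ ≤ C * ((1 - p) / θ) * p ^ j := by
    intro j
    calc (1 - p) * ‖w j‖ ≤ (1 - p) * (C * (p ^ j / lowD p θ j)) := by gcongr; exact hwD j
      _ ≤ (1 - p) * (C * (p ^ j / θ)) := by
          gcongr; exact lowD_ge hp0 hp1 hθ hθ1 j
      _ = _ := by ring
  have hgeo1 : ∀ j, (1 - p) * ‖w j‖ ≤ C * ((1 - p) / θ) := fun j =>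
    (hgeo j).trans (mul_le_of_le_one_right (by positivity) (hpj j))
  have hv : ∀ j, ‖((1 - p : ℝ) : ℂ) * w j‖ ≤ 1 / 2 := by
    intro j; rw [norm_mul, hsc]; exact (hgeo1 j).trans hB
  have hu' : ∀ j, ‖(1 - P) * w j‖ ≤ G * ((1 - p) * ‖w j‖) := by
    intro j; rw [norm_mul, ← mul_assoc]; gcongr
  have hu : ∀ j, ‖(1 - P) * w j‖ ≤ 1 / 2 := fun j =>
    (hu' j).trans ((mul_le_mul_of_nonneg_left (hgeo1 j) hG0).trans hGB)
  have hsum : Summable fun j => log (1 + (1 - P) * w j) := by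
    refine Summable.of_norm_bounded
      (g := fun j => 3 / 2 * (G * (C * ((1 - p) / θ))) * p ^ j)
      ((summable_geometric_of_lt_one hp.le hp1).mul_left _) fun j => ?_
    calc _ ≤ 3 / 2 * ‖(1 - P) * w j‖ := Complex.norm_log_one_add_half_le_self (hu j)
      _ ≤ 3 / 2 * (G * (C * ((1 - p) / θ) * p ^ j)) := by
          gcongr
          exact (hu' j).trans (mul_le_mul_of_nonneg_left (hgeo j) hG0)
      _ = _ := by ring
  have hone : ∀ j, 1 + (1 - P) * w j ≠ 0 := by
    intro j h0
    have : (1 - P) * w j = -1 := by linear_combination h0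
    have h2 := hu j
    rw [this] at h2; norm_num at h2
  have hprod : ∏' j : ℕ, f j / (1 - exp (((j : ℂ) + c) * Real.log p) * z)
      = exp (-∑' j, log (1 + (1 - P) * w j)) := by
    have h := (hsum.hasSum.neg).cexp.tprod_eq
    rw [← h]
    refine tprod_congr fun j => ?_
    simp only [Function.comp]
    rw [Complex.exp_neg, Complex.exp_log (hone j)]
    have e : exp (((j : ℂ) + c) * Real.log p) = (p : ℂ) ^ j * P := by
      rw [add_mul, Complex.exp_add, Complex.exp_nat_mul, ← Complex.ofReal_exp, Real.exp_log hp]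
    rw [e]
    have hfj : f j ≠ 0 := hf j
    have : 1 - (p : ℂ) ^ j * P * z = f j * (1 + (1 - P) * w j) := by
      rw [hw]
      simp only
      field_simp
      simp only [hfdef]
      ring
    rw [this, div_mul_eq_div_div, div_self hfj, one_div]
  have htel : ∀ N, ∑ j ∈ Finset.range N, log (1 + ((1 - p : ℝ) : ℂ) * w j)
      = log (f N) - log (f 0) := by
    intro N
    rw [← Finset.sum_range_sub (fun j => log (f j))]
    refine Finset.sum_congr rfl fun j _ => ?_
    rw [← hlog j]
    congr 1
    have hfj : f j ≠ 0 := hf j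
    rw [eq_div_iff hfj, hw]
    simp only
    field_simp
    simp only [hfdef]
    push_cast
    ring
  have hfN : Tendsto (fun N => log (f N)) atTop (nhds 0) := by
    have h1 : Tendsto f atTop (nhds 1) := by
      have : Tendsto (fun j : ℕ => (p : ℂ) ^ j) atTop (nhds 0) :=
        tendsto_pow_atTop_nhds_zero_of_norm_lt_one
          (by rw [Complex.norm_real, Real.norm_of_nonneg hp.le]; exact hp1)
      simpa using (this.mul_const z).const_sub 1
    simpa using h1.clog (by simp)
  have hterm : ∀ j, ‖log (1 + (1 - P) * w j) - c * log (1 + ((1 - p : ℝ) : ℂ) * w j)‖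
      ≤ ((G ^ 2 + ‖c‖) * C ^ 2 + 2 * C1 * C) * ((1 - p) ^ 2 * p ^ j / lowD p θ j ^ 2) := by
    intro j
    set T := (1 - p) ^ 2 * p ^ j / lowD p θ j ^ 2 with hT
    have hDj := hD j
    have t2 : ((1 - p) * ‖w j‖) ^ 2 ≤ C ^ 2 * T := by
      calc ((1 - p) * ‖w j‖) ^ 2 ≤ ((1 - p) * (C * (p ^ j / lowD p θ j))) ^ 2 := by
            gcongr; exact hwD j
        _ = C ^ 2 * T * p ^ j := by rw [hT]; field_simp
        _ ≤ C ^ 2 * T := mul_le_of_le_one_right (by positivity) (hpj j)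
    -- The bound `D_j ≤ 2` turns `1 / D_j` into `2 / D_j²`.
    have t1 : (1 - p) ^ 2 * ‖w j‖ ≤ 2 * C * T := by
      calc (1 - p) ^ 2 * ‖w j‖ ≤ (1 - p) ^ 2 * (C * (p ^ j / lowD p θ j)) := by
            gcongr; exact hwD j
        _ = C * T * lowD p θ j := by rw [hT]; field_simp
        _ ≤ C * T * 2 := by gcongr; exact lowD_le hp0 hp1 hθ hθ1 j
        _ = _ := by ring
    have e : log (1 + (1 - P) * w j) - c * log (1 + ((1 - p : ℝ) : ℂ) * w j)
        = (log (1 + (1 - P) * w j) - (1 - P) * w j)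
          - c * (log (1 + ((1 - p : ℝ) : ℂ) * w j) - ((1 - p : ℝ) : ℂ) * w j)
          + (1 - P - c * (1 - p : ℝ)) * w j := by ring
    rw [e]
    have n1 : ‖log (1 + (1 - P) * w j) - (1 - P) * w j‖ ≤ G ^ 2 * (C ^ 2 * T) := by
      calc _ ≤ ‖(1 - P) * w j‖ ^ 2 := norm_log_sub_le (hu j)
        _ ≤ (G * ((1 - p) * ‖w j‖)) ^ 2 := by gcongr; exact hu' j
        _ = G ^ 2 * ((1 - p) * ‖w j‖) ^ 2 := by ring
        _ ≤ _ := by gcongr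
    have n2 : ‖c * (log (1 + ((1 - p : ℝ) : ℂ) * w j) - ((1 - p : ℝ) : ℂ) * w j)‖
        ≤ ‖c‖ * (C ^ 2 * T) := by
      rw [norm_mul]
      gcongr
      refine (norm_log_sub_le (hv j)).trans ?_
      rwa [norm_mul, hsc]
    have n3 : ‖(1 - P - c * (1 - p : ℝ)) * w j‖ ≤ C1 * (2 * C * T) := by
      rw [norm_mul]
      calc _ ≤ C1 * (1 - p) ^ 2 * ‖w j‖ := by gcongr
        _ = C1 * ((1 - p) ^ 2 * ‖w j‖) := by ring
        _ ≤ _ := by gcongr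
    refine (norm_add_le _ _).trans ?_
    have := norm_sub_le (log (1 + (1 - P) * w j) - (1 - P) * w j)
      (c * (log (1 + ((1 - p : ℝ) : ℂ) * w j) - ((1 - p : ℝ) : ℂ) * w j))
    linarith
  have hf0 : f 0 = 1 - z := by simp [hfdef]
  refine ⟨-∑' j, log (1 + (1 - P) * w j) - c * log (1 - z), ?_, ?_⟩
  · have hlim : Tendsto (fun N => -∑ j ∈ Finset.range N, log (1 + (1 - P) * w j)
        + c * (log (f N) - log (f 0))) atTop
        (nhds (-∑' j, log (1 + (1 - P) * w j) - c * log (1 - z))) := by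
      have h := (hsum.hasSum.tendsto_sum_nat.neg).add
        ((hfN.sub_const (log (f 0))).const_mul c)
      rw [hf0] at h ⊢
      convert h using 2
      ring
    refine le_of_tendsto hlim.norm (Eventually.of_forall fun N => ?_)
    rw [← htel N, Finset.mul_sum, ← norm_neg]
    have : -(-∑ j ∈ Finset.range N, log (1 + (1 - P) * w j)
        + ∑ j ∈ Finset.range N, c * log (1 + ((1 - p : ℝ) : ℂ) * w j))
        = ∑ j ∈ Finset.range N,
          (log (1 + (1 - P) * w j) - c * log (1 + ((1 - p : ℝ) : ℂ) * w j)) := by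
      rw [Finset.sum_sub_distrib]; ring
    rw [this]
    refine (norm_sum_le _ _).trans ((Finset.sum_le_sum fun j _ => hterm j).trans ?_)
    rw [← Finset.mul_sum]
    gcongr
    exact sum_lowD_le hp0 hp1 hθ hθ1 N
  · rw [hprod]; congr 1; ring

/-! ### The characters -/

/-- Quantitative form of the confluence at one point: `echar q h c x = (-x)^c exp E` with
`E = O(h)`. The constants `κ`, `R`, `L₀`, `r` can be chosen uniformly on a compact set.
The product contributes `(1 - z)^c`, and `h/(1 - p) · (1 - z) = h - x`. -/
lemma echar_eq_exp (c x : ℂ) {q h κ R L₀ r : ℝ} (hq : 1 < q) (hh : 0 < h) (hκ : 0 < κ)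
    (hL₀ : 0 < L₀) (hr : 0 < r) (hr1 : r ≤ 1) (hrL : r ≤ L₀ / 4)
    (hx : -x ∈ slitPlane) (hxR : ‖x‖ ≤ R)
    (hsec : ∀ a b : ℝ, 0 ≤ a → 0 ≤ b → κ * (a + b) ≤ ‖(a + b * (-x) : ℂ)‖)
    (hq2 : 1 / 2 ≤ q⁻¹) (hc : ‖c‖ * (2 * (1 - q⁻¹)) ≤ 1) (hL : (1 - q⁻¹) / h ≤ 1 / L₀)
    (hhκ : h / κ ≤ 1 / 2) (hB : (1 + R / L₀) / κ * (h / r) ≤ 1 / 2)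
    (hGB : (4 * ‖c‖ ^ 2 + 2 * ‖c‖) * ((1 + R / L₀) / κ * (h / r)) ≤ 1 / 2) :
    ∃ E : ℂ, ‖E‖ ≤ ((((4 * ‖c‖ ^ 2 + 2 * ‖c‖) ^ 2 + ‖c‖) * ((1 + R / L₀) / κ) ^ 2
        + 2 * (4 * ‖c‖ ^ 2 + ‖c‖) * ((1 + R / L₀) / κ)) * (8 / r)
        + ‖c‖ * (3 / 2 / κ)) * h ∧
      echar q h c x = exp (c * log (-x) + E) := by
  have hp1 : q⁻¹ < 1 := inv_lt_one_of_one_lt₀ hq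
  obtain ⟨p, hpq⟩ : ∃ p : ℝ, p = q⁻¹ := ⟨_, rfl⟩
  have hpc : (q : ℂ)⁻¹ = (p : ℂ) := by rw [hpq]; push_cast; rfl
  rw [← hpq] at hq2 hc hL hp1
  have hp : 0 < p := by linarith
  have hs : 0 < 1 - p := by linarith
  have hhc : (h : ℂ) ≠ 0 := by exact_mod_cast hh.ne'
  have hR : 0 ≤ R := (norm_nonneg x).trans hxR
  obtain ⟨t, ht⟩ : ∃ t : ℝ, t = (1 - p) / h := ⟨_, rfl⟩
  have ht0 : 0 < t := by rw [ht]; positivity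
  rw [← ht] at hL
  have hz : zc q h x = (p : ℂ) - t * (-x) := by
    rw [zc, hpc, ht]; push_cast; field_simp; ring
  obtain ⟨z, hzz⟩ : ∃ z, z = zc q h x := ⟨_, rfl⟩
  rw [← hzz] at hz
  have hfj : ∀ j : ℕ, 1 - (p : ℂ) ^ j * z
      = ((1 - p ^ (j + 1) : ℝ) : ℂ) + ((p ^ j * t : ℝ) : ℂ) * (-x) := by
    intro j; rw [hz]; push_cast; ring
  have ha : ∀ j : ℕ, 0 ≤ 1 - p ^ (j + 1) := fun j =>
    sub_nonneg.2 (pow_le_one₀ hp.le hp1.le)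
  have hb : ∀ j : ℕ, 0 < p ^ j * t := fun j => by positivity
  -- The comparison sequence is used with `θ = r (1 - p)/h`, so that `(1 - p)/θ = h/r`.
  have hθ : 0 < r * t := by positivity
  have hθ1 : r * t ≤ 1 / 4 := by
    calc r * t ≤ L₀ / 4 * (1 / L₀) := by gcongr
      _ = 1 / 4 := by field_simp
  have hst : (1 - p) / (r * t) = h / r := by rw [ht]; field_simp
  have hZ : ‖z‖ ≤ 1 + R / L₀ := by
    rw [hz]
    calc _ ≤ ‖(p : ℂ)‖ + ‖(t : ℂ) * (-x)‖ := norm_sub_le _ _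
      _ = p + t * ‖x‖ := by
          rw [norm_mul, norm_neg, Complex.norm_real, Complex.norm_real,
            Real.norm_of_nonneg hp.le, Real.norm_of_nonneg ht0.le]
      _ ≤ 1 + 1 / L₀ * R := by gcongr
      _ = _ := by ring
  have hlow : ∀ j : ℕ, ‖z‖ / ‖1 - (p : ℂ) ^ j * z‖
      ≤ (1 + R / L₀) / κ / lowD p (r * t) j := by
    intro j
    have hD := hθ.trans_le (lowD_ge hq2 hp1 hθ hθ1 j)
    have h1 : κ * lowD p (r * t) j ≤ ‖1 - (p : ℂ) ^ j * z‖ := by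
      rw [hfj j]
      refine le_trans ?_ (hsec _ _ (ha j) (hb j).le)
      gcongr
      unfold lowD
      have := hb j
      nlinarith
    rw [div_div]
    gcongr
  obtain ⟨E, hE, hprod⟩ := tprod_eq_exp c z (C := (1 + R / L₀) / κ) hq2 hp1 hθ hθ1 (by positivity)
    hc (fun j => by rw [hfj j]; exact (log_sub_log_of_ray hx (ha j) (hb j) (ha j) (hb j)).1) hlow
    (fun j => by
      rw [hfj j, hfj (j + 1)]
      exact (log_sub_log_of_ray hx (ha j) (hb j) (ha (j + 1)) (hb (j + 1))).2)
    (by rw [hst]; exact hB) (by rw [hst]; exact hGB)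
  rw [hst] at hE
  -- The passage from `log (h - x)` to `log (-x)` costs `log (1 + h / (-x)) = O(h)`.
  have hx0 : -x ≠ 0 := Complex.slitPlane_ne_zero hx
  have hκx : κ ≤ ‖x‖ := by simpa using hsec 0 1 le_rfl zero_le_one
  have hl := (log_sub_log_of_ray hx (a := 0) (b := 1) (a' := h) (b' := 1) le_rfl one_pos hh.le
    one_pos).2
  simp only [ofReal_zero, ofReal_one, one_mul, zero_add] at hl
  have hl1 : ((h : ℂ) + -x) / -x = 1 + h / (-x) := by rw [add_div, div_self hx0, add_comm]
  rw [hl1] at hl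
  have hnx : ‖(h : ℂ) / (-x)‖ ≤ h / κ := by
    rw [norm_div, norm_neg, Complex.norm_real, Real.norm_of_nonneg hh.le]
    gcongr
  have hln := Complex.norm_log_one_add_half_le_self (hnx.trans hhκ)
  refine ⟨E + c * log (1 + h / (-x)), ?_, ?_⟩
  · calc _ ≤ ‖E‖ + ‖c‖ * ‖log (1 + h / (-x))‖ := by
          rw [← norm_mul]; exact norm_add_le _ _
      _ ≤ ‖E‖ + ‖c‖ * (3 / 2 * (h / κ)) := by
          gcongr; exact hln.trans (by gcongr)
      _ ≤ _ := by
          refine (add_le_add_left hE _).trans (le_of_eq ?_)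
          ring
  · have hLpos : 0 < h / (1 - p) := by positivity
    have hsc : (1 : ℂ) - p ≠ 0 := by exact_mod_cast hs.ne'
    have h1z : 1 - z ≠ 0 := by
      have := hfj 0
      simp only [pow_zero, one_mul] at this
      rw [this]
      have := (log_sub_log_of_ray hx (ha 0) (hb 0) (ha 0) (hb 0)).1
      simpa using this
    have hmul : ((h / (1 - p) : ℝ) : ℂ) * (1 - z) = h + -x := by
      rw [hz, ht]; push_cast; field_simp; ring
    have hlogm := Complex.log_ofReal_mul hLpos h1z
    rw [hmul] at hlogm
    have hct : ∀ j : ℕ, charTerm q h c x j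
        = (1 - (p : ℂ) ^ j * z) / (1 - exp (((j : ℂ) + c) * Real.log p) * z) := by
      intro j; rw [charTerm, hpc, ← hzz, ← hpq]
    rw [echar, ← hpq, tprod_congr hct, hprod,
      Complex.cpow_def_of_ne_zero (by exact_mod_cast hLpos.ne'), ← Complex.exp_add,
      ← Complex.ofReal_log hLpos.le]
    congr 1
    rw [hl, hlogm]
    ring

/-- Confluence `C3` of the characters: if `q_n → 1`, `h_n → 0` and
`h_n/(q_n-1) → ℓ ∈ (0,+∞]`, then `e_c^{(q_n,h_n)}` converges, uniformly on compact
subsets of `ℂ ∖ [0,∞)`, to the principal branch of `(-x)^c = exp(c·Log(-x))`. -/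
theorem echar_confluence_C3 (c : ℂ) (q h : ℕ → ℝ)
    (hq : ∀ n, 1 < q n) (hh : ∀ n, 0 < h n)
    (hq1 : Tendsto q atTop (nhds 1)) (hh0 : Tendsto h atTop (nhds 0))
    (hl : (∃ l : ℝ, 0 < l ∧ Tendsto (fun n => h n / (q n - 1)) atTop (nhds l)) ∨
      Tendsto (fun n => h n / (q n - 1)) atTop atTop)
    (K : Set ℂ) (hK : IsCompact K)
    (hKd : ∀ x ∈ K, ∀ t : ℝ, 0 ≤ t → x ≠ (t : ℂ)) :
    TendstoUniformlyOn (fun (n : ℕ) (x : ℂ) => echar (q n) (h n) c x)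
      (fun x : ℂ => Complex.exp (c * Complex.log (-x))) atTop K := by
  obtain ⟨κ, hκ, hsec⟩ := exists_sector_bound hK hKd
  have hslit : ∀ x ∈ K, -x ∈ slitPlane := by
    intro x hx
    rw [Complex.mem_slitPlane_iff]
    by_contra! hcon
    simp only [neg_re, neg_im, neg_eq_zero] at hcon
    refine hKd x hx x.re (by linarith [hcon.1]) (Complex.ext (by simp) (by simp [hcon.2]))
  obtain ⟨R, hR⟩ := hK.exists_bound_of_continuousOn (f := fun x : ℂ => x) continuousOn_id
  obtain ⟨A, hA⟩ := hK.exists_bound_of_continuousOn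
    (f := fun x : ℂ => exp (c * log (-x)))
    (by
      refine ContinuousOn.cexp (continuousOn_const.mul ?_)
      exact ContinuousOn.clog continuousOn_neg hslit)
  obtain ⟨L₀, hL₀, hLev⟩ : ∃ L₀ : ℝ, 0 < L₀ ∧ ∀ᶠ n in atTop, L₀ ≤ h n / (q n - 1) := by
    rcases hl with ⟨l, hl0, hl⟩ | hl
    · exact ⟨l / 2, by positivity, hl.eventually_const_le (by linarith)⟩
    · exact ⟨1, one_pos, hl.eventually_ge_atTop 1⟩
  obtain ⟨r, hr, hr1, hrL⟩ : ∃ r : ℝ, 0 < r ∧ r ≤ 1 ∧ r ≤ L₀ / 4 :=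
    ⟨min 1 (L₀ / 4), by positivity, min_le_left _ _, min_le_right _ _⟩
  set M := ((((4 * ‖c‖ ^ 2 + 2 * ‖c‖) ^ 2 + ‖c‖) * ((1 + R / L₀) / κ) ^ 2
        + 2 * (4 * ‖c‖ ^ 2 + ‖c‖) * ((1 + R / L₀) / κ)) * (8 / r)
        + ‖c‖ * (3 / 2 / κ)) with hM
  have small : ∀ (a b : ℝ), 0 < b → ∀ᶠ n in atTop, a * h n < b := by
    intro a b hb
    have : Tendsto (fun n => a * h n) atTop (nhds 0) := by simpa using hh0.const_mul a
    exact this.eventually_lt_const hb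
  have hp : Tendsto (fun n => (q n)⁻¹) atTop (nhds 1) := by
    simpa using hq1.inv₀ one_ne_zero
  have hcp : Tendsto (fun n => ‖c‖ * (2 * (1 - (q n)⁻¹))) atTop (nhds 0) := by
    simpa using ((hp.const_sub 1).const_mul 2).const_mul ‖c‖
  rw [Metric.tendstoUniformlyOn_iff]
  intro ε hε
  filter_upwards [hLev, hp.eventually_const_le (show (1 / 2 : ℝ) < 1 by norm_num),
    hcp.eventually_le_const one_pos, small κ⁻¹ (1 / 2) (by norm_num),
    small ((1 + R / L₀) / κ / r) (1 / 2) (by norm_num),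
    small ((4 * ‖c‖ ^ 2 + 2 * ‖c‖) * ((1 + R / L₀) / κ / r)) (1 / 2) (by norm_num),
    small M 1 one_pos, small (A * (2 * M)) ε hε] with n h1 h2 h3 h4 h5 h6 h7 h8 x hx
  have hq0 := hq n
  have hhn := hh n
  have hLn : (1 - (q n)⁻¹) / h n ≤ 1 / L₀ := by
    have hq' : 0 < q n - 1 := by linarith
    rw [le_div_iff₀ hq'] at h1
    rw [div_le_div_iff₀ hhn hL₀]
    have e : (1 - (q n)⁻¹) = (q n)⁻¹ * (q n - 1) := by field_simp
    have hi : (q n)⁻¹ ≤ 1 := (inv_lt_one_of_one_lt₀ hq0).le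
    have : (q n)⁻¹ * (q n - 1) ≤ 1 * (q n - 1) := mul_le_mul_of_nonneg_right hi hq'.le
    rw [e]
    nlinarith
  obtain ⟨E, hE, he⟩ := echar_eq_exp c x hq0 hhn hκ hL₀ hr hr1 hrL (hslit x hx) (hR x hx)
    (hsec x hx) h2 h3 hLn (by rw [div_eq_inv_mul]; exact h4.le)
    (le_trans (le_of_eq (by ring)) h5.le) (le_trans (le_of_eq (by ring)) h6.le)
  rw [← hM] at hE
  rw [he, dist_comm, dist_eq_norm, Complex.exp_add]
  have e : exp (c * log (-x)) * exp E - exp (c * log (-x))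
      = exp (c * log (-x)) * (exp E - 1) := by ring
  rw [e, norm_mul]
  have hA0 : 0 ≤ A := (norm_nonneg _).trans (hA x hx)
  calc _ ≤ A * (2 * ‖E‖) := by
        gcongr
        · exact hA x hx
        · exact Complex.norm_exp_sub_one_le (hE.trans h7.le)
    _ ≤ A * (2 * (M * h n)) := by gcongr
    _ = A * (2 * M) * h n := by ring
    _ < ε := h8
end
end
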